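/- arXiv:math/0412143 — 3 statements merged into one kernel-verified Lean document; each statement's English description precedes it below -/
import Mathlib

section
/- There exists a unique ℂ-algebra homomorphism Δ : A(q) → A(q) ⊗_ℂ A(q) satisfying Δ(a) = a ⊗ a and Δ(x) = x ⊗ (∑_{y=0}^{n−1} q^y 1_y) + 1 ⊗ (1 − 1_0)x + a^{n−1} ⊗ 1_0 x, and a unique ℂ-algebra homomorphism ε : A(q) → ℂ with ε(a) = 1 and ε(x) = 0; moreover these satisfy the counit axioms: (ε ⊗ id) ∘ Δ = id and (id ⊗ ε) ∘ Δ = id (under the canonical identifications ℂ ⊗ A(q) ≅ A(q) ≅ A(q) ⊗ ℂ). -/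
noncomputable section

open scoped TensorProduct

/-- The two generators. -/
inductive AqGen : Type
  | a : AqGen
  | x : AqGen

open FreeAlgebra

/-- The defining relations of `A(q)`. -/
inductive AqRel (n : ℕ) (q : ℂ) : FreeAlgebra ℂ AqGen → FreeAlgebra ℂ AqGen → Prop
  | comm : AqRel n q (ι ℂ AqGen.a * ι ℂ AqGen.x) (q ^ n • (ι ℂ AqGen.x * ι ℂ AqGen.a))
  | aOrd : AqRel n q ((ι ℂ AqGen.a) ^ n) 1
  | xNil : AqRel n q ((ι ℂ AqGen.x) ^ (n ^ 2)) 0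

/-- The algebra `A(q)`. -/
abbrev Aq (n : ℕ) (q : ℂ) : Type := RingQuot (AqRel n q)

/-- The image of the generator `a` in `A(q)`. -/
def Aq.a (n : ℕ) (q : ℂ) : Aq n q := RingQuot.mkAlgHom ℂ (AqRel n q) (ι ℂ AqGen.a)

/-- The image of the generator `x` in `A(q)`. -/
def Aq.x (n : ℕ) (q : ℂ) : Aq n q := RingQuot.mkAlgHom ℂ (AqRel n q) (ι ℂ AqGen.x)

/-- The primitive idempotents `1_i = (1/n) ∑_{k} q^{-nik} a^k` of `ℂ[a] ⊆ A(q)`. -/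
def Aq.e (n : ℕ) (q : ℂ) (i : ℕ) : Aq n q :=
  (n : ℂ)⁻¹ • ∑ k ∈ Finset.range n, (q⁻¹ ^ (n * i * k)) • (Aq.a n q ^ k)

namespace AqProof

/-- Gaussian binomial coefficients. -/
def gb (q : ℂ) : ℕ → ℕ → ℂ
  | _, 0 => 1
  | 0, _ + 1 => 0
  | m + 1, k + 1 => gb q m k + q ^ (k + 1) * gb q m (k + 1)

lemma gb_zero (q : ℂ) (m : ℕ) : gb q m 0 = 1 := by cases m <;> rfl

lemma gb_succ (q : ℂ) (m k : ℕ) :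
    gb q (m + 1) (k + 1) = gb q m k + q ^ (k + 1) * gb q m (k + 1) := rfl

lemma gb_lt (q : ℂ) (m : ℕ) : ∀ k, m < k → gb q m k = 0 := by
  induction m with
  | zero => intro k hk; obtain ⟨k, rfl⟩ := Nat.exists_eq_succ_of_ne_zero hk.ne'; rfl
  | succ m ih =>
    intro k hk
    obtain ⟨k, rfl⟩ := Nat.exists_eq_succ_of_ne_zero (by omega : k ≠ 0)
    rw [Nat.succ_eq_add_one, gb_succ, ih k (by omega), ih (k + 1) (by omega)]; simp

lemma gb_self (q : ℂ) (m : ℕ) : gb q m m = 1 := by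
  induction m with
  | zero => rfl
  | succ m ih => rw [gb_succ, ih, gb_lt q m (m + 1) (by omega)]; simp

lemma gb_rel (q : ℂ) (m : ℕ) : ∀ k,
    q ^ k * (q ^ (k + 1) - 1) * gb q m (k + 1) = (q ^ m - q ^ k) * gb q m k := by
  induction m with
  | zero =>
    intro k
    rcases k with _ | k
    · rw [gb_lt q 0 _ (by omega)]; simp
    · rw [gb_lt q 0 _ (by omega), gb_lt q 0 _ (by omega)]; simp
  | succ m ih =>
    intro k
    rcases k with _ | k
    · have := ih 0
      rw [gb_succ, gb_zero, gb_zero] at *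
      linear_combination q * this
    · have h1 := ih k
      have h2 := ih (k + 1)
      rw [gb_succ, gb_succ]
      linear_combination q ^ (k + 2) * h2 + q * h1

lemma gb_vanish (q : ℂ) (N : ℕ) (hN : N ≠ 0) (hq : IsPrimitiveRoot q N) :
    ∀ k, k + 1 < N → gb q N (k + 1) = 0 := by
  intro k
  have h0 : q ≠ 0 := hq.ne_zero hN
  induction k with
  | zero =>
    intro hk
    have h := gb_rel q N 0
    rw [hq.pow_eq_one] at h
    have h1 : q ^ 1 ≠ 1 := hq.pow_ne_one_of_pos_of_lt (by omega) hk
    simpa [sub_ne_zero.2 (by simpa using h1)] using h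
  | succ k ih =>
    intro hk
    have h := gb_rel q N (k + 1)
    rw [ih (by omega), mul_zero] at h
    have h1 : q ^ (k + 1 + 1) ≠ 1 := hq.pow_ne_one_of_pos_of_lt (by omega) hk
    rcases mul_eq_zero.1 h with h | h
    · exact absurd h (mul_ne_zero (pow_ne_zero _ h0) (sub_ne_zero.2 h1))
    · exact h

section
variable {R : Type*} [Ring R] [Algebra ℂ R]

lemma pow_comm' (q : ℂ) (U V : R) (h : U * V = q • (V * U)) (k : ℕ) :
    U * V ^ k = q ^ k • (V ^ k * U) := by
  induction k with
  | zero => simp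
  | succ k ih =>
    rw [pow_succ, ← mul_assoc, ih, smul_mul_assoc, mul_assoc, h, mul_smul_comm, smul_smul,
      mul_assoc, pow_succ]

lemma q_binomial (q : ℂ) (U V : R) (h : U * V = q • (V * U)) (m : ℕ) :
    (U + V) ^ m = ∑ k ∈ Finset.range (m + 1), gb q m k • (V ^ k * U ^ (m - k)) := by
  induction m with
  | zero => simp [gb_zero]
  | succ m ih =>
    have e1 : U * ∑ k ∈ Finset.range (m + 1), gb q m k • (V ^ k * U ^ (m - k)) =
        ∑ k ∈ Finset.range (m + 2), (q ^ k * gb q m k) • (V ^ k * U ^ (m + 1 - k)) := by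
      rw [Finset.sum_range_succ _ (m + 1), gb_lt q m (m + 1) (by omega), mul_zero, zero_smul,
        add_zero, Finset.mul_sum]
      refine Finset.sum_congr rfl fun k hk => ?_
      rw [Finset.mem_range] at hk
      rw [mul_smul_comm, ← mul_assoc, pow_comm' q U V h, smul_mul_assoc, smul_smul, mul_assoc,
        ← pow_succ', mul_comm, show m - k + 1 = m + 1 - k by omega]
    have e2 : V * ∑ k ∈ Finset.range (m + 1), gb q m k • (V ^ k * U ^ (m - k)) =
        ∑ k ∈ Finset.range (m + 1), gb q m k • (V ^ (k + 1) * U ^ (m + 1 - (k + 1))) := by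
      rw [Finset.mul_sum]
      refine Finset.sum_congr rfl fun k hk => ?_
      rw [mul_smul_comm, ← mul_assoc, ← pow_succ', Nat.add_sub_add_right]
    rw [pow_succ', ih, add_mul, e1, e2, Finset.sum_range_succ' _ (m + 1),
      Finset.sum_range_succ' _ (m + 1), add_right_comm, ← Finset.sum_add_distrib]
    congr 1
    · refine Finset.sum_congr rfl fun k hk => ?_
      rw [← add_smul, gb_succ, add_comm]
    · simp [gb_zero]

lemma add_pow_prim (q : ℂ) (N : ℕ) (hN : N ≠ 0) (hq : IsPrimitiveRoot q N) (U V : R)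
    (h : U * V = q • (V * U)) : (U + V) ^ N = U ^ N + V ^ N := by
  obtain ⟨M, rfl⟩ := Nat.exists_eq_succ_of_ne_zero hN
  rw [q_binomial q U V h, Finset.sum_range_succ, Finset.sum_range_succ', Finset.sum_eq_zero]
  · simp [gb_zero, gb_self]
  · intro k hk
    rw [Finset.mem_range] at hk
    rw [gb_vanish q _ hN hq k (by simpa using hk), zero_smul]

/-- idempotents, abstractly -/
def ee (n : ℕ) (q : ℂ) (a : R) (i : ℕ) : R :=
  (n : ℂ)⁻¹ • ∑ k ∈ Finset.range n, (q⁻¹ ^ (n * i * k)) • (a ^ k)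

def SS (n : ℕ) (q : ℂ) (a : R) : R := ∑ y ∈ Finset.range n, q ^ y • ee n q a y

variable {n : ℕ} {q : ℂ} {a x : R}

lemma ee_comm (i : ℕ) {b : R} (h : Commute b a) : Commute b (ee n q a i) := by
  unfold ee
  refine Commute.smul_right (Commute.sum_right _ _ _ fun k _ => ?_) _
  exact (h.pow_right k).smul_right _

lemma SS_comm {b : R} (h : Commute b a) : Commute b (SS n q a) :=
  Commute.sum_right _ _ _ fun k _ => (ee_comm k h).smul_right _

lemma geom_zero (hn : 2 ≤ n) (hq : IsPrimitiveRoot q (n ^ 2)) (i : ℕ) (hi : i < n) :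
    (n : ℂ)⁻¹ * ∑ k ∈ Finset.range n, q⁻¹ ^ (n * i * k) = if i = 0 then 1 else 0 := by
  have hn0 : (n : ℂ) ≠ 0 := by exact_mod_cast (by omega : n ≠ 0)
  split_ifs with h
  · subst h; simp [hn0]
  · have h1 : (q⁻¹) ^ (n * i) ≠ 1 := by
      apply hq.inv.pow_ne_one_of_pos_of_lt
      · exact Nat.mul_ne_zero (by omega) h
      · rw [sq]; exact Nat.mul_lt_mul_of_pos_left hi (by omega)
    simp_rw [pow_mul _ (n * i)]
    have h2 := geom_sum_mul ((q⁻¹) ^ (n * i)) n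
    have h3 : ((q⁻¹) ^ (n * i)) ^ n = 1 := by
      rw [← pow_mul, show n * i * n = n ^ 2 * i by ring, pow_mul, hq.inv.pow_eq_one, one_pow]
    rw [h3, sub_self] at h2
    rcases mul_eq_zero.1 h2 with h2 | h2
    · rw [h2, mul_zero]
    · exact absurd h2 (sub_ne_zero.2 h1)

lemma a_pow_ee (hn : 2 ≤ n) (ha : a ^ n = 1) (k : ℕ) : a ^ k * ee n q a 0 = ee n q a 0 := by
  induction k with
  | zero => simp
  | succ k ih =>
    rw [pow_succ, mul_assoc]
    have : a * ee n q a 0 = ee n q a 0 := by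
      unfold ee
      rw [mul_smul_comm, Finset.mul_sum]
      congr 1
      simp only [mul_zero, zero_mul, pow_zero, one_smul, ← pow_succ']
      have h1 := Finset.sum_range_succ (fun k => a ^ k) n
      have h2 := Finset.sum_range_succ' (fun k => a ^ k) n
      rw [h1, ha, pow_zero] at h2
      exact (add_right_cancel h2).symm
    rw [this, ih]

lemma ee_mul_ee0 (hn : 2 ≤ n) (hq : IsPrimitiveRoot q (n ^ 2)) (ha : a ^ n = 1) (i : ℕ)
    (hi : i < n) : ee n q a i * ee n q a 0 = if i = 0 then ee n q a 0 else 0 := by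
  have := geom_zero hn hq i hi
  conv_lhs => enter [1]; unfold ee
  rw [smul_mul_assoc, Finset.sum_mul]
  simp_rw [smul_mul_assoc, a_pow_ee hn ha]
  rw [← Finset.sum_smul, smul_smul, this]
  split_ifs <;> simp

lemma SS_mul_ee0 (hn : 2 ≤ n) (hq : IsPrimitiveRoot q (n ^ 2)) (ha : a ^ n = 1) :
    SS n q a * ee n q a 0 = ee n q a 0 := by
  unfold SS
  rw [Finset.sum_mul, Finset.sum_eq_single 0]
  · rw [smul_mul_assoc, ee_mul_ee0 hn hq ha 0 (by omega)]; simp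
  · intro b hb hb0
    rw [smul_mul_assoc, ee_mul_ee0 hn hq ha b (Finset.mem_range.1 hb)]; simp [hb0]
  · intro h; exact absurd (Finset.mem_range.2 (by omega)) h

lemma x_mul_a (hq0 : q ≠ 0) (hax : a * x = q ^ n • (x * a)) : x * a = q⁻¹ ^ n • (a * x) := by
  rw [hax, smul_smul, ← mul_pow, inv_mul_cancel₀ hq0, one_pow, one_smul]

lemma x_mul_ee (hq0 : q ≠ 0) (hax : a * x = q ^ n • (x * a)) (i : ℕ) :
    x * ee n q a i = ee n q a (i + 1) * x := by
  unfold ee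
  rw [mul_smul_comm, smul_mul_assoc, Finset.mul_sum, Finset.sum_mul]
  congr 1
  refine Finset.sum_congr rfl fun k _ => ?_
  rw [mul_smul_comm, smul_mul_assoc, pow_comm' _ x a (x_mul_a hq0 hax), smul_smul]
  congr 1
  rw [← pow_mul, ← pow_add]; congr 1; ring

lemma ee_n (hq : IsPrimitiveRoot q (n ^ 2)) : ee n q a n = ee n q a 0 := by
  unfold ee
  congr 1
  refine Finset.sum_congr rfl fun k _ => ?_
  congr 1
  rw [← sq, pow_mul, hq.inv.pow_eq_one]; simp

lemma x_mul_SS (hq0 : q ≠ 0) (hq : IsPrimitiveRoot q (n ^ 2)) (hax : a * x = q ^ n • (x * a)) :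
    q • (x * SS n q a) = (SS n q a - ee n q a 0 + q ^ n • ee n q a 0) * x := by
  have : SS n q a - ee n q a 0 + q ^ n • ee n q a 0 =
      ∑ y ∈ Finset.range n, q ^ (y + 1) • ee n q a (y + 1) := by
    have h1 := Finset.sum_range_succ (fun y => q ^ y • ee n q a y) n
    have h2 := Finset.sum_range_succ' (fun y => q ^ y • ee n q a y) n
    rw [h1, ee_n hq, pow_zero, one_smul] at h2
    rw [← eq_sub_iff_add_eq] at h2
    unfold SS
    rw [sub_add_eq_add_sub, sub_eq_iff_eq_add]
    rw [eq_sub_iff_add_eq] at h2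
    exact h2
  rw [this]
  unfold SS
  rw [Finset.mul_sum, Finset.smul_sum, Finset.sum_mul]
  refine Finset.sum_congr rfl fun y _ => ?_
  rw [mul_smul_comm, x_mul_ee hq0 hax, smul_smul, smul_mul_assoc, pow_succ']

/-- The twist `W_j`. -/
def WW (n : ℕ) (q : ℂ) (a : R) (j : ℕ) : R ⊗[ℂ] R :=
  1 ⊗ₜ[ℂ] (1 - ee n q a j) + (a ^ (n - 1)) ⊗ₜ[ℂ] ee n q a j

def XX (n : ℕ) (q : ℂ) (a x : R) : R ⊗[ℂ] R :=
  x ⊗ₜ[ℂ] SS n q a + 1 ⊗ₜ[ℂ] ((1 - ee n q a 0) * x) + (a ^ (n - 1)) ⊗ₜ[ℂ] (ee n q a 0 * x)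

lemma XX_eq : XX n q a x = x ⊗ₜ[ℂ] SS n q a + WW n q a 0 * (1 ⊗ₜ[ℂ] x) := by
  simp [XX, WW, add_mul, add_assoc]

lemma x_mul_WW (hq0 : q ≠ 0) (hax : a * x = q ^ n • (x * a)) (j : ℕ) :
    ((1 : R) ⊗ₜ[ℂ] x) * WW n q a j = WW n q a (j + 1) * (1 ⊗ₜ[ℂ] x) := by
  simp [WW, mul_add, add_mul, mul_sub, sub_mul, x_mul_ee hq0 hax]

lemma xpow_mul_WW (hq0 : q ≠ 0) (hax : a * x = q ^ n • (x * a)) (k : ℕ) : ∀ j,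
    ((1 : R) ⊗ₜ[ℂ] x) ^ k * WW n q a j = WW n q a (j + k) * (1 ⊗ₜ[ℂ] x) ^ k := by
  induction k with
  | zero => intro j; simp
  | succ k ih =>
    intro j
    rw [pow_succ, mul_assoc, x_mul_WW hq0 hax, ← mul_assoc, ih, mul_assoc, add_right_comm,
      add_assoc]

lemma V_pow (hq0 : q ≠ 0) (hax : a * x = q ^ n • (x * a)) (k : ℕ) :
    ∃ Y : R ⊗[ℂ] R, (WW n q a 0 * (1 ⊗ₜ[ℂ] x)) ^ k = Y * (1 ⊗ₜ[ℂ] x) ^ k := by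
  induction k with
  | zero => exact ⟨1, by simp⟩
  | succ k ih =>
    obtain ⟨Y, hY⟩ := ih
    refine ⟨Y * WW n q a (0 + k), ?_⟩
    rw [pow_succ, hY, mul_assoc, ← mul_assoc (_ ^ k), xpow_mul_WW hq0 hax, mul_assoc, mul_assoc,
      pow_succ]

lemma UV (hn : 2 ≤ n) (hq : IsPrimitiveRoot q (n ^ 2)) (hax : a * x = q ^ n • (x * a))
    (ha : a ^ n = 1) :
    (x ⊗ₜ[ℂ] SS n q a) * (WW n q a 0 * (1 ⊗ₜ[ℂ] x)) =
      q • ((WW n q a 0 * (1 ⊗ₜ[ℂ] x)) * (x ⊗ₜ[ℂ] SS n q a)) := by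
  have hq0 : q ≠ 0 := hq.ne_zero (by positivity)
  have hS := SS_mul_ee0 (a := a) hn hq ha
  have hS' : ee n q a 0 * SS n q a = ee n q a 0 := by
    rw [(SS_comm (ee_comm 0 (Commute.refl a)).symm : Commute (ee n q a 0) (SS n q a)).eq, hS]
  have hee : ee n q a 0 * ee n q a 0 = ee n q a 0 := by
    rw [ee_mul_ee0 hn hq ha 0 (by omega)]; simp
  have hxx := x_mul_SS hq0 hq hax
  have hxa : q ^ n • (a ^ (n - 1) * x) = x * a ^ (n - 1) := by
    rw [pow_comm' _ x a (x_mul_a hq0 hax)]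
    congr 1
    have h5 : (q⁻¹ ^ n) ^ (n - 1) * q⁻¹ ^ n = 1 := by
      rw [← pow_succ, show n - 1 + 1 = n by omega, ← pow_mul, ← sq, hq.inv.pow_eq_one]
    have h6 : q⁻¹ ^ n * q ^ n = 1 := by
      rw [← mul_pow, inv_mul_cancel₀ hq0, one_pow]
    linear_combination (-(q ^ n)) * h5 + (q⁻¹ ^ n) ^ (n - 1) * h6
  have h1 : q • ((1 - ee n q a 0) * x * SS n q a) = (SS n q a - ee n q a 0) * x := by
    rw [mul_assoc, ← mul_smul_comm, hxx, ← mul_assoc]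
    congr 1
    simp only [mul_add, sub_mul, mul_sub, one_mul, hS', hee, mul_smul_comm, sub_self, smul_zero,
      add_zero, sub_zero]
  have h2 : q • (ee n q a 0 * x * SS n q a) = q ^ n • (ee n q a 0 * x) := by
    rw [mul_assoc, ← mul_smul_comm, hxx, ← mul_assoc, ← smul_mul_assoc]
    congr 1
    simp only [mul_add, mul_sub, hS', hee, mul_smul_comm]
    abel
  have e1 : q • ((WW n q a 0 * (1 ⊗ₜ[ℂ] x)) * (x ⊗ₜ[ℂ] SS n q a)) =
      x ⊗ₜ[ℂ] (q • ((1 - ee n q a 0) * x * SS n q a)) +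
      (a ^ (n - 1) * x) ⊗ₜ[ℂ] (q • (ee n q a 0 * x * SS n q a)) := by
    simp only [WW, add_mul, Algebra.TensorProduct.tmul_mul_tmul, one_mul, mul_one, smul_add,
      TensorProduct.tmul_smul]
  rw [e1, h1, h2, TensorProduct.tmul_smul, TensorProduct.smul_tmul', hxa]
  simp only [WW, add_mul, mul_add, Algebra.TensorProduct.tmul_mul_tmul, one_mul, mul_one,
    mul_sub, sub_mul, ← mul_assoc, hS]

lemma XX_pow (hn : 2 ≤ n) (hq : IsPrimitiveRoot q (n ^ 2)) (hax : a * x = q ^ n • (x * a))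
    (ha : a ^ n = 1) (hx : x ^ (n ^ 2) = 0) : XX n q a x ^ (n ^ 2) = 0 := by
  have hN : n ^ 2 ≠ 0 := by positivity
  have hq0 : q ≠ 0 := hq.ne_zero hN
  rw [XX_eq, add_pow_prim q _ hN hq _ _ (UV hn hq hax ha)]
  obtain ⟨Y, hY⟩ := V_pow hq0 hax (n ^ 2)
  rw [hY, Algebra.TensorProduct.tmul_pow, Algebra.TensorProduct.tmul_pow, hx]
  simp

lemma XX_comm (hax : a * x = q ^ n • (x * a)) :
    (a ⊗ₜ[ℂ] a) * XX n q a x = q ^ n • (XX n q a x * (a ⊗ₜ[ℂ] a)) := by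
  have h1 : a * SS n q a = SS n q a * a := SS_comm (Commute.refl a)
  have h2 : a * ee n q a 0 = ee n q a 0 * a := ee_comm 0 (Commute.refl a)
  have h3 : a * ((1 - ee n q a 0) * x) = q ^ n • ((1 - ee n q a 0) * x * a) := by
    rw [← mul_assoc, mul_sub, mul_one, h2, mul_assoc, ← mul_smul_comm, ← hax, sub_mul, sub_mul,
      one_mul, mul_assoc]
  have h4 : a * (ee n q a 0 * x) = q ^ n • (ee n q a 0 * x * a) := by
    rw [← mul_assoc, h2, mul_assoc, mul_assoc, hax, mul_smul_comm]
  simp only [XX, mul_add, add_mul, Algebra.TensorProduct.tmul_mul_tmul, one_mul, mul_one, h1, h3,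
    h4, hax, ← pow_succ, ← pow_succ', smul_add, TensorProduct.tmul_smul, TensorProduct.smul_tmul']

lemma eps_ee (ε : R →ₐ[ℂ] ℂ) (hn : 2 ≤ n) (hq : IsPrimitiveRoot q (n ^ 2)) (h : ε a = 1)
    (i : ℕ) (hi : i < n) : ε (ee n q a i) = if i = 0 then 1 else 0 := by
  rw [← geom_zero hn hq i hi]
  simp [ee, h]

lemma eps_SS (ε : R →ₐ[ℂ] ℂ) (hn : 2 ≤ n) (hq : IsPrimitiveRoot q (n ^ 2)) (h : ε a = 1) :
    ε (SS n q a) = 1 := by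
  unfold SS
  rw [map_sum, Finset.sum_eq_single 0]
  · simp [eps_ee ε hn hq h 0 (by omega)]
  · intro b hb hb0
    simp [eps_ee ε hn hq h b (Finset.mem_range.1 hb), hb0]
  · intro h; exact absurd (Finset.mem_range.2 (by omega)) h

lemma counit_left (ε : R →ₐ[ℂ] ℂ) (h : ε a = 1) (h' : ε x = 0) :
    (Algebra.TensorProduct.lid ℂ R)
      ((Algebra.TensorProduct.map ε (AlgHom.id ℂ R)) (XX n q a x)) = x := by
  simp [XX, h, h', sub_mul]

lemma counit_right (ε : R →ₐ[ℂ] ℂ) (hn : 2 ≤ n) (hq : IsPrimitiveRoot q (n ^ 2)) (h : ε a = 1)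
    (h' : ε x = 0) :
    (Algebra.TensorProduct.rid ℂ ℂ R)
      ((Algebra.TensorProduct.map (AlgHom.id ℂ R) ε) (XX n q a x)) = x := by
  simp [XX, h', eps_SS ε hn hq h]

end

lemma aq_comm (n : ℕ) (q : ℂ) : Aq.a n q * Aq.x n q = q ^ n • (Aq.x n q * Aq.a n q) := by
  have := RingQuot.mkAlgHom_rel ℂ (AqRel.comm (n := n) (q := q))
  simp only [map_mul, map_smul] at this
  exact this

lemma aq_ord (n : ℕ) (q : ℂ) : Aq.a n q ^ n = 1 := by
  have := RingQuot.mkAlgHom_rel ℂ (AqRel.aOrd (n := n) (q := q))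
  simp only [map_pow, map_one] at this
  exact this

lemma aq_nil (n : ℕ) (q : ℂ) : Aq.x n q ^ (n ^ 2) = 0 := by
  have := RingQuot.mkAlgHom_rel ℂ (AqRel.xNil (n := n) (q := q))
  simp only [map_pow, map_zero] at this
  exact this

lemma aq_ext {n : ℕ} {q : ℂ} {B : Type*} [Semiring B] [Algebra ℂ B] {f g : Aq n q →ₐ[ℂ] B}
    (ha : f (Aq.a n q) = g (Aq.a n q)) (hx : f (Aq.x n q) = g (Aq.x n q)) : f = g := by
  apply RingQuot.ringQuot_ext'
  apply FreeAlgebra.hom_ext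
  funext t
  cases t
  · exact ha
  · exact hx

lemma aq_lift {n : ℕ} {q : ℂ} {B : Type*} [Ring B] [Algebra ℂ B] (a x : B)
    (h1 : a * x = q ^ n • (x * a)) (h2 : a ^ n = 1) (h3 : x ^ (n ^ 2) = 0) :
    ∃ f : Aq n q →ₐ[ℂ] B, f (Aq.a n q) = a ∧ f (Aq.x n q) = x := by
  let g : FreeAlgebra ℂ AqGen →ₐ[ℂ] B :=
    FreeAlgebra.lift ℂ (fun t => match t with | AqGen.a => a | AqGen.x => x)
  have ga : g (FreeAlgebra.ι ℂ AqGen.a) = a := FreeAlgebra.lift_ι_apply _ _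
  have gx : g (FreeAlgebra.ι ℂ AqGen.x) = x := FreeAlgebra.lift_ι_apply _ _
  have hg : ∀ ⦃u v⦄, AqRel n q u v → g u = g v := by
    intro u v h
    cases h
    · simp only [map_mul, map_smul, ga, gx, h1]
    · simp only [map_pow, map_one, ga, h2]
    · simp only [map_pow, map_zero, gx, h3]
  refine ⟨RingQuot.liftAlgHom ℂ ⟨g, hg⟩, ?_, ?_⟩
  · exact (RingQuot.liftAlgHom_mkAlgHom_apply ℂ g hg _).trans ga
  · exact (RingQuot.liftAlgHom_mkAlgHom_apply ℂ g hg _).trans gx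

end AqProof

/-- There is a unique algebra map `Δ : A(q) → A(q) ⊗ A(q)` with
`Δ(a) = a ⊗ a` and
`Δ(x) = x ⊗ ∑_y q^y 1_y + 1 ⊗ (1 - 1_0)x + a^{n-1} ⊗ 1_0 x`,
and a unique algebra map `ε : A(q) → ℂ` with `ε(a) = 1`, `ε(x) = 0`;
moreover they satisfy the counit axioms. -/
theorem Aq_coproduct_counit (n : ℕ) (hn : 2 ≤ n) (q : ℂ)
    (hq : IsPrimitiveRoot q (n ^ 2)) :
    (∃! Δ : Aq n q →ₐ[ℂ] (Aq n q ⊗[ℂ] Aq n q),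
      Δ (Aq.a n q) = Aq.a n q ⊗ₜ[ℂ] Aq.a n q ∧
      Δ (Aq.x n q) =
        Aq.x n q ⊗ₜ[ℂ] (∑ y ∈ Finset.range n, q ^ y • Aq.e n q y)
        + 1 ⊗ₜ[ℂ] ((1 - Aq.e n q 0) * Aq.x n q)
        + (Aq.a n q ^ (n - 1)) ⊗ₜ[ℂ] (Aq.e n q 0 * Aq.x n q)) ∧
    (∃! ε : Aq n q →ₐ[ℂ] ℂ, ε (Aq.a n q) = 1 ∧ ε (Aq.x n q) = 0) ∧
    (∀ (Δ : Aq n q →ₐ[ℂ] (Aq n q ⊗[ℂ] Aq n q)) (ε : Aq n q →ₐ[ℂ] ℂ),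
      (Δ (Aq.a n q) = Aq.a n q ⊗ₜ[ℂ] Aq.a n q ∧
       Δ (Aq.x n q) =
        Aq.x n q ⊗ₜ[ℂ] (∑ y ∈ Finset.range n, q ^ y • Aq.e n q y)
        + 1 ⊗ₜ[ℂ] ((1 - Aq.e n q 0) * Aq.x n q)
        + (Aq.a n q ^ (n - 1)) ⊗ₜ[ℂ] (Aq.e n q 0 * Aq.x n q)) →
      (ε (Aq.a n q) = 1 ∧ ε (Aq.x n q) = 0) →
      ∀ z : Aq n q,
        (Algebra.TensorProduct.lid ℂ (Aq n q))
          ((Algebra.TensorProduct.map ε (AlgHom.id ℂ (Aq n q))) (Δ z)) = z ∧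
        (Algebra.TensorProduct.rid ℂ ℂ (Aq n q))
          ((Algebra.TensorProduct.map (AlgHom.id ℂ (Aq n q)) ε) (Δ z)) = z) := by
  have hXX : Aq.x n q ⊗ₜ[ℂ] (∑ y ∈ Finset.range n, q ^ y • Aq.e n q y)
        + 1 ⊗ₜ[ℂ] ((1 - Aq.e n q 0) * Aq.x n q)
        + (Aq.a n q ^ (n - 1)) ⊗ₜ[ℂ] (Aq.e n q 0 * Aq.x n q) =
      AqProof.XX n q (Aq.a n q) (Aq.x n q) := rfl
  rw [hXX]
  have c := AqProof.aq_comm n q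
  have o := AqProof.aq_ord n q
  have z := AqProof.aq_nil n q
  refine ⟨?_, ?_, ?_⟩
  · obtain ⟨Δ, h1, h2⟩ := AqProof.aq_lift (n := n) (q := q) (Aq.a n q ⊗ₜ[ℂ] Aq.a n q)
      (AqProof.XX n q (Aq.a n q) (Aq.x n q)) (AqProof.XX_comm c)
      (by rw [Algebra.TensorProduct.tmul_pow, o]; rfl) (AqProof.XX_pow hn hq c o z)
    refine ⟨Δ, ⟨h1, h2⟩, ?_⟩
    rintro Δ' ⟨h3, h4⟩
    exact AqProof.aq_ext (n := n) (q := q) (f := Δ') (g := Δ) (h3.trans h1.symm) (h4.trans h2.symm)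
  · obtain ⟨ε, h1, h2⟩ := AqProof.aq_lift (n := n) (q := q) (1 : ℂ) 0 (by simp) (by simp)
      (zero_pow (by positivity))
    refine ⟨ε, ⟨h1, h2⟩, ?_⟩
    rintro ε' ⟨h3, h4⟩
    exact AqProof.aq_ext (h3.trans h1.symm) (h4.trans h2.symm)
  · rintro Δ ε ⟨h1, h2⟩ ⟨h3, h4⟩ w
    constructor
    · have : ((Algebra.TensorProduct.lid ℂ (Aq n q)).toAlgHom.comp
          ((Algebra.TensorProduct.map ε (AlgHom.id ℂ (Aq n q))).comp Δ)) =
          AlgHom.id ℂ (Aq n q) := by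
        apply AqProof.aq_ext
        · simp [h1, h3]
        · have := AqProof.counit_left (n := n) (q := q) ε h3 h4
          rw [← h2] at this
          exact this
      exact DFunLike.congr_fun this w
    · have : ((Algebra.TensorProduct.rid ℂ ℂ (Aq n q)).toAlgHom.comp
          ((Algebra.TensorProduct.map (AlgHom.id ℂ (Aq n q)) ε).comp Δ)) =
          AlgHom.id ℂ (Aq n q) := by
        apply AqProof.aq_ext
        · simp [h1, h3]
        · have := AqProof.counit_right (n := n) (q := q) ε hn hq h3 h4
          rw [← h2] at this
          exact this
      exact DFunLike.congr_fun this w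
end
end

section
/- There exists a unique ℂ-linear anti-homomorphism S : A(q) → A(q) (i.e., S(1) = 1 and S(uv) = S(v)S(u) for all u, v) satisfying S(a) = a^{n−1} and S(x) = −x · ∑_{z=0}^{n−1} q^{n−z} 1_z. Moreover S²(a) = a, S²(x) = q^{n+1} x, and consequently S^{2n}(u) = a u a^{n−1} for all u ∈ A(q), i.e., S^{2n} is the inner automorphism Ad(a). -/
noncomputable section

open FreeAlgebra

theorem Aq.rel_comm (n : ℕ) (q : ℂ) : Aq.a n q * Aq.x n q = q ^ n • (Aq.x n q * Aq.a n q) := by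
  have h := RingQuot.mkAlgHom_rel ℂ (AqRel.comm (n := n) (q := q))
  simpa [Aq.a, Aq.x] using h

theorem Aq.rel_a (n : ℕ) (q : ℂ) : Aq.a n q ^ n = 1 := by
  have h := RingQuot.mkAlgHom_rel ℂ (AqRel.aOrd (n := n) (q := q))
  simpa [Aq.a, Aq.x] using h

theorem Aq.rel_x (n : ℕ) (q : ℂ) : Aq.x n q ^ (n ^ 2) = 0 := by
  have h := RingQuot.mkAlgHom_rel ℂ (AqRel.xNil (n := n) (q := q))
  simpa [Aq.a, Aq.x] using h

theorem Aq.hom_ext {n : ℕ} {q : ℂ} {B : Type*} [Semiring B] [Algebra ℂ B]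
    (f g : Aq n q →ₐ[ℂ] B) (ha : f (Aq.a n q) = g (Aq.a n q)) (hx : f (Aq.x n q) = g (Aq.x n q)) :
    f = g := by
  apply RingQuot.ringQuot_ext'
  apply FreeAlgebra.hom_ext
  funext i
  cases i
  · exact ha
  · exact hx

/-- The idempotent polynomial evaluated at `b`. -/
def Aq.E (n : ℕ) (q : ℂ) (b : Aq n q) (i : ℕ) : Aq n q :=
  (n : ℂ)⁻¹ • ∑ k ∈ Finset.range n, (q⁻¹ ^ (n * i * k)) • (b ^ k)

/-- The polynomial defining the element `D`, evaluated at `b`. -/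
def Aq.D (n : ℕ) (q : ℂ) (b : Aq n q) : Aq n q :=
  ∑ z ∈ Finset.range n, q ^ (n - z) • Aq.E n q b z

theorem Aq.pow_eig {n : ℕ} {q : ℂ} (b y : Aq n q) (c : ℂ) (h : b * y = c • y) (k : ℕ) :
    b ^ k * y = c ^ k • y := by
  induction k with
  | zero => simp
  | succ k ih => rw [pow_succ, mul_assoc, h, mul_smul_comm, ih, smul_smul, pow_succ, mul_comm]

theorem Aq.omega_prim (n : ℕ) (hn : 2 ≤ n) (q : ℂ) (hq : IsPrimitiveRoot q (n ^ 2)) :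
    IsPrimitiveRoot (q ^ n) n :=
  hq.pow (by positivity) (by ring)

theorem Aq.geom (n : ℕ) (hn : 2 ≤ n) (q : ℂ) (hq : IsPrimitiveRoot q (n ^ 2)) (i j : ℕ)
    (hi : i < n) :
    (n : ℂ)⁻¹ * ∑ k ∈ Finset.range n, q⁻¹ ^ (n * i * k) * ((q ^ n) ^ j) ^ k
      = if i = j % n then 1 else 0 := by
  have hw := Aq.omega_prim n hn q hq
  have hn0 : (n : ℂ) ≠ 0 := by
    have : n ≠ 0 := by omega
    exact_mod_cast this
  have hw0 : q ^ n ≠ 0 := hw.ne_zero (by omega)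
  have key : ∀ k, q⁻¹ ^ (n * i * k) * ((q ^ n) ^ j) ^ k = (((q ^ n) ^ i)⁻¹ * (q ^ n) ^ j) ^ k := by
    intro k
    rw [mul_pow, pow_mul, pow_mul, inv_pow, inv_pow]
  simp_rw [key]
  split_ifs with h
  · have : (q ^ n) ^ j = (q ^ n) ^ i := by
      rw [h, ← pow_mod_orderOf (q ^ n) j, ← hw.eq_orderOf]
    rw [this, inv_mul_cancel₀ (pow_ne_zero _ hw0)]
    simp [hn0]
  · set c := ((q ^ n) ^ i)⁻¹ * (q ^ n) ^ j with hc
    have hc1 : c ≠ 1 := by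
      intro h1
      rw [hc, inv_mul_eq_one₀ (pow_ne_zero _ hw0)] at h1
      have h2 : (q ^ n) ^ j = (q ^ n) ^ (j % n) := by
        conv_lhs => rw [← pow_mod_orderOf (q ^ n) j, ← hw.eq_orderOf]
      rw [h2] at h1
      exact h (hw.pow_inj hi (Nat.mod_lt _ (by omega)) h1)
    have hcn : c ^ n = 1 := by
      rw [hc, mul_pow, inv_pow, pow_right_comm (q ^ n) i, pow_right_comm (q ^ n) j, hw.pow_eq_one]
      simp
    rw [geom_sum_eq hc1, hcn]
    simp

theorem Aq.E_eig (n : ℕ) (hn : 2 ≤ n) (q : ℂ) (hq : IsPrimitiveRoot q (n ^ 2)) (b y : Aq n q)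
    (j : ℕ) (h : b * y = (q ^ n) ^ j • y) (i : ℕ) (hi : i < n) :
    Aq.E n q b i * y = (if i = j % n then (1 : ℂ) else 0) • y := by
  rw [← Aq.geom n hn q hq i j hi, Aq.E, smul_mul_assoc, Finset.sum_mul, mul_smul, Finset.sum_smul]
  congr 1
  apply Finset.sum_congr rfl
  intro k _
  rw [smul_mul_assoc, Aq.pow_eig b y _ h, smul_smul]

theorem Aq.D_eig (n : ℕ) (hn : 2 ≤ n) (q : ℂ) (hq : IsPrimitiveRoot q (n ^ 2)) (b y : Aq n q)
    (j : ℕ) (h : b * y = (q ^ n) ^ j • y) :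
    Aq.D n q b * y = q ^ (n - j % n) • y := by
  rw [Aq.D, Finset.sum_mul, Finset.sum_eq_single (j % n)]
  · rw [smul_mul_assoc, Aq.E_eig n hn q hq b y j h _ (Nat.mod_lt _ (by omega))]
    simp
  · intro z hz hne
    rw [smul_mul_assoc, Aq.E_eig n hn q hq b y j h _ (Finset.mem_range.1 hz)]
    simp [hne]
  · intro h
    exact absurd (Finset.mem_range.2 (Nat.mod_lt _ (by omega))) h

theorem Aq.a_e (n : ℕ) (hn : 2 ≤ n) (q : ℂ) (hq : IsPrimitiveRoot q (n ^ 2)) (z : ℕ) :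
    Aq.a n q * Aq.e n q z = (q ^ n) ^ z • Aq.e n q z := by
  have hq0 : q ≠ 0 := hq.ne_zero (by positivity)
  have hqn : q ^ (n * n) = 1 := by rw [← pow_two]; exact hq.pow_eq_one
  rw [Aq.e, mul_smul_comm, smul_comm ((q ^ n) ^ z), Finset.mul_sum]
  refine congrArg (fun t => (n : ℂ)⁻¹ • t) ?_
  rw [Finset.smul_sum]
  have h1 : ∀ k, Aq.a n q * q⁻¹ ^ (n * z * k) • Aq.a n q ^ k
      = (q ^ n) ^ z • (q⁻¹ ^ (n * z * (k + 1)) • Aq.a n q ^ (k + 1)) := by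
    intro k
    rw [mul_smul_comm, smul_smul, ← pow_succ']
    congr 1
    rw [mul_add, pow_add, mul_one, ← pow_mul, mul_left_comm, ← mul_pow, mul_inv_cancel₀ hq0]
    simp
  simp_rw [h1]
  have h2 := Finset.sum_range_succ (fun k => (q ^ n) ^ z • (q⁻¹ ^ (n * z * k) • Aq.a n q ^ k)) n
  rw [Finset.sum_range_succ'] at h2
  have h3 : q⁻¹ ^ (n * z * n) = 1 := by
    rw [show n * z * n = n * n * z by ring, inv_pow, pow_mul, hqn]
    simp
  simp only [h3, Aq.rel_a] at h2
  simpa using h2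

theorem Aq.sum_e (n : ℕ) (hn : 2 ≤ n) (q : ℂ) (hq : IsPrimitiveRoot q (n ^ 2)) :
    ∑ z ∈ Finset.range n, Aq.e n q z = 1 := by
  have hn0 : (n : ℂ) ≠ 0 := by
    have : n ≠ 0 := by omega
    exact_mod_cast this
  have hw := Aq.omega_prim n hn q hq
  simp_rw [Aq.e]
  rw [← Finset.smul_sum, Finset.sum_comm]
  have h1 : ∀ k ∈ Finset.range n, ∑ z ∈ Finset.range n, q⁻¹ ^ (n * z * k) • Aq.a n q ^ k
      = if k = 0 then (n : ℂ) • (1 : Aq n q) else 0 := by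
    intro k hk
    rw [← Finset.sum_smul]
    split_ifs with h
    · subst h
      simp
    · have hp : ∀ z, q⁻¹ ^ (n * z * k) = (((q ^ n) ^ k)⁻¹) ^ z := by
        intro z
        rw [inv_pow, inv_pow, ← pow_mul, ← pow_mul]
        congr 2
        ring
      simp_rw [hp]
      have hc1 : ((q ^ n) ^ k)⁻¹ ≠ 1 := by
        rw [Ne, inv_eq_one]
        exact hw.pow_ne_one_of_pos_of_lt h (Finset.mem_range.1 hk)
      rw [geom_sum_eq hc1, inv_pow, ← pow_mul, mul_comm k, pow_mul, hw.pow_eq_one]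
      simp
  rw [Finset.sum_congr rfl h1, Finset.sum_ite_eq' (Finset.range n) 0]
  rw [if_pos (Finset.mem_range.2 (by omega)), smul_smul, inv_mul_cancel₀ hn0, one_smul]

theorem Aq.ext_e (n : ℕ) (hn : 2 ≤ n) (q : ℂ) (hq : IsPrimitiveRoot q (n ^ 2)) (u v : Aq n q)
    (h : ∀ z < n, u * Aq.e n q z = v * Aq.e n q z) : u = v := by
  rw [← mul_one u, ← mul_one v, ← Aq.sum_e n hn q hq, Finset.mul_sum, Finset.mul_sum]
  exact Finset.sum_congr rfl fun z hz => h z (Finset.mem_range.1 hz)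

theorem Aq.DxD (n : ℕ) (hn : 2 ≤ n) (q : ℂ) (hq : IsPrimitiveRoot q (n ^ 2)) :
    Aq.D n q (Aq.a n q ^ (n - 1)) * (Aq.x n q * Aq.D n q (Aq.a n q)) = q ^ (n + 1) • Aq.x n q := by
  apply Aq.ext_e n hn q hq
  intro z hz
  have h1 := Aq.D_eig n hn q hq _ _ z (Aq.a_e n hn q hq z)
  have hax : Aq.a n q * (Aq.x n q * Aq.e n q z) = (q ^ n) ^ (z + 1) • (Aq.x n q * Aq.e n q z) := by
    rw [← mul_assoc, Aq.rel_comm, smul_mul_assoc, mul_assoc, Aq.a_e n hn q hq, mul_smul_comm,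
      smul_smul, pow_succ']
  have h2 := Aq.pow_eig _ _ _ hax (n - 1)
  rw [← pow_mul] at h2
  have h3 := Aq.D_eig n hn q hq _ _ _ h2
  have hm : (z + 1) * (n - 1) % n = n - 1 - z := by
    obtain ⟨m, rfl⟩ : ∃ m, n = z + 1 + m := ⟨n - (z + 1), by omega⟩
    have : (z + 1) * (z + 1 + m - 1) = m + (z + 1 + m) * z := by
      rw [show z + 1 + m - 1 = z + m by omega]
      ring
    rw [this, Nat.add_mul_mod_self_left, Nat.mod_eq_of_lt (by omega)]
    omega
  rw [mul_assoc, mul_assoc, h1, mul_smul_comm, mul_smul_comm, h3, hm, smul_smul, ← pow_add,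
    Nat.mod_eq_of_lt hz, smul_mul_assoc]
  congr 2
  omega

theorem Aq.commute_D (n : ℕ) (q : ℂ) (b : Aq n q) : Commute b (Aq.D n q b) := by
  unfold Aq.D Aq.E
  refine Commute.sum_right _ _ _ fun z _ => Commute.smul_right (Commute.smul_right ?_ _) _
  exact Commute.sum_right _ _ _ fun k _ => Commute.smul_right (Commute.pow_right (Commute.refl b) k) _

theorem gen_mem_mul_x {A : Type*} [Ring A] [Algebra ℂ A] (a x : A) (c : ℂ)
    (hax : a * x = c • (x * a)) (d : A) (hd : d ∈ Algebra.adjoin ℂ {a}) :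
    ∃ d' ∈ Algebra.adjoin ℂ {a}, d * x = x * d' := by
  induction hd using Algebra.adjoin_induction with
  | mem y hy =>
    rw [Set.mem_singleton_iff] at hy
    subst hy
    refine ⟨c • y, Subalgebra.smul_mem _ (Algebra.self_mem_adjoin_singleton ℂ _) _, ?_⟩
    rw [hax, mul_smul_comm]
  | algebraMap r =>
    exact ⟨algebraMap ℂ _ r, Subalgebra.algebraMap_mem _ _, Algebra.commutes _ _⟩
  | add u v _ _ hu hv =>
    obtain ⟨u', hu', hu⟩ := hu
    obtain ⟨v', hv', hv⟩ := hv
    exact ⟨u' + v', add_mem hu' hv', by rw [add_mul, mul_add, hu, hv]⟩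
  | mul u v _ _ hu hv =>
    obtain ⟨u', hu', hu⟩ := hu
    obtain ⟨v', hv', hv⟩ := hv
    exact ⟨u' * v', mul_mem hu' hv', by rw [mul_assoc, hv, ← mul_assoc, hu, mul_assoc]⟩

theorem gen_xD_pow {A : Type*} [Ring A] [Algebra ℂ A] (a x : A) (c : ℂ)
    (hax : a * x = c • (x * a)) (d : A) (hd : d ∈ Algebra.adjoin ℂ {a}) (k : ℕ) :
    ∃ d' ∈ Algebra.adjoin ℂ {a}, (x * d) ^ k = x ^ k * d' := by
  induction k with
  | zero => exact ⟨1, one_mem _, by simp⟩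
  | succ k ih =>
    obtain ⟨d', hd', h⟩ := ih
    obtain ⟨d'', hd'', h2⟩ := gen_mem_mul_x a x c hax d' hd'
    refine ⟨d'' * d, mul_mem hd'' hd, ?_⟩
    rw [pow_succ, h, mul_assoc, ← mul_assoc d', h2, pow_succ]
    simp only [mul_assoc]

theorem gen_xD_nil {A : Type*} [Ring A] [Algebra ℂ A] (a x : A) (c : ℂ)
    (hax : a * x = c • (x * a)) (n m : ℕ) (α : ℕ → ℂ) (β : ℂ) (γ : ℕ → ℕ → ℂ) (hx : x ^ m = 0) :
    (x * ∑ z ∈ Finset.range n, α z • (β • ∑ k ∈ Finset.range n, γ z k • a ^ k)) ^ m = 0 := by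
  obtain ⟨d', _, h⟩ := gen_xD_pow a x c hax
    (∑ z ∈ Finset.range n, α z • (β • ∑ k ∈ Finset.range n, γ z k • a ^ k))
    (by
      refine sum_mem fun z _ => Subalgebra.smul_mem _ (Subalgebra.smul_mem _ ?_ _) _
      exact sum_mem fun k _ => Subalgebra.smul_mem _ (pow_mem (Algebra.self_mem_adjoin_singleton ℂ _) k) _) m
  rw [h, hx, zero_mul]

theorem Aq.xD_nil (n : ℕ) (q : ℂ) : (Aq.x n q * Aq.D n q (Aq.a n q)) ^ (n ^ 2) = 0 :=
  gen_xD_nil (Aq.a n q) (Aq.x n q) (q ^ n) (Aq.rel_comm n q) n (n ^ 2) (fun z => q ^ (n - z))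
    (n : ℂ)⁻¹ (fun z k => q⁻¹ ^ (n * z * k)) (Aq.rel_x n q)

theorem Aq.neg_eq (n : ℕ) (q : ℂ) (u : Aq n q) : -u = (-1 : ℂ) • u :=
  (neg_one_smul ℂ u).symm

/-- The images of the generators under the antipode. -/
def Aq.Sgen (n : ℕ) (q : ℂ) : AqGen → (Aq n q)ᵐᵒᵖ
  | AqGen.a => MulOpposite.op (Aq.a n q ^ (n - 1))
  | AqGen.x => MulOpposite.op (-(Aq.x n q * Aq.D n q (Aq.a n q)))

theorem Aq.inv_mul (n : ℕ) (hn : 2 ≤ n) (q : ℂ) : Aq.a n q ^ (n - 1) * Aq.a n q = 1 := by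
  rw [← pow_succ, Nat.sub_add_cancel (by omega), Aq.rel_a]

theorem Aq.mul_inv (n : ℕ) (hn : 2 ≤ n) (q : ℂ) : Aq.a n q * Aq.a n q ^ (n - 1) = 1 := by
  rw [← pow_succ', Nat.sub_add_cancel (by omega), Aq.rel_a]

theorem Aq.x_inv (n : ℕ) (hn : 2 ≤ n) (q : ℂ) :
    Aq.x n q * Aq.a n q ^ (n - 1) = q ^ n • (Aq.a n q ^ (n - 1) * Aq.x n q) := by
  calc Aq.x n q * Aq.a n q ^ (n - 1)
      = Aq.a n q ^ (n - 1) * (Aq.a n q * Aq.x n q) * Aq.a n q ^ (n - 1) := by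
        rw [← mul_assoc, Aq.inv_mul n hn, one_mul]
    _ = q ^ n • (Aq.a n q ^ (n - 1) * Aq.x n q) := by
        rw [Aq.rel_comm, mul_smul_comm, smul_mul_assoc, mul_assoc, mul_assoc, Aq.mul_inv n hn,
          mul_one]

/-- The antipode as a homomorphism to the opposite algebra. -/
theorem Aq.exists_hom (n : ℕ) (hn : 2 ≤ n) (q : ℂ) :
    ∃ f : Aq n q →ₐ[ℂ] (Aq n q)ᵐᵒᵖ, f (Aq.a n q) = Aq.Sgen n q AqGen.a ∧
      f (Aq.x n q) = Aq.Sgen n q AqGen.x := by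
  have hrel : ∀ ⦃u v : FreeAlgebra ℂ AqGen⦄, AqRel n q u v →
      FreeAlgebra.lift ℂ (Aq.Sgen n q) u = FreeAlgebra.lift ℂ (Aq.Sgen n q) v := by
    intro u v h
    cases h with
    | comm =>
      simp only [map_mul, map_smul, FreeAlgebra.lift_ι_apply, Aq.Sgen]
      apply MulOpposite.unop_injective
      simp only [MulOpposite.unop_mul, MulOpposite.unop_smul, MulOpposite.unop_op]
      rw [Aq.neg_eq, smul_mul_assoc, mul_smul_comm, smul_comm (q ^ n), mul_assoc,
        ← ((Aq.commute_D n q (Aq.a n q)).pow_left (n - 1)).eq, ← mul_assoc, Aq.x_inv n hn,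
        smul_mul_assoc, mul_assoc]
    | aOrd =>
      simp only [map_pow, map_one, FreeAlgebra.lift_ι_apply, Aq.Sgen]
      rw [← MulOpposite.op_pow, ← pow_mul, mul_comm, pow_mul, Aq.rel_a, one_pow, MulOpposite.op_one]
    | xNil =>
      simp only [map_pow, map_zero, FreeAlgebra.lift_ι_apply, Aq.Sgen]
      rw [← MulOpposite.op_pow, Aq.neg_eq, smul_pow, Aq.xD_nil, smul_zero, MulOpposite.op_zero]
  refine ⟨RingQuot.liftAlgHom ℂ ⟨FreeAlgebra.lift ℂ (Aq.Sgen n q), hrel⟩, ?_, ?_⟩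
  · rw [Aq.a, RingQuot.liftAlgHom_mkAlgHom_apply, FreeAlgebra.lift_ι_apply]
  · rw [Aq.x, RingQuot.liftAlgHom_mkAlgHom_apply, FreeAlgebra.lift_ι_apply]

/-- A linear anti-homomorphism as an algebra homomorphism to the opposite algebra. -/
def Aq.toOp {n : ℕ} {q : ℂ} (S : Aq n q →ₗ[ℂ] Aq n q) (h1 : S 1 = 1)
    (hm : ∀ u v : Aq n q, S (u * v) = S v * S u) : Aq n q →ₐ[ℂ] (Aq n q)ᵐᵒᵖ :=
  AlgHom.ofLinearMap ((MulOpposite.opLinearEquiv ℂ).toLinearMap ∘ₗ S)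
    (by simp [h1]) (by intro u v; simp [hm])

/-- The square of a linear anti-homomorphism. -/
def Aq.sq {n : ℕ} {q : ℂ} (S : Aq n q →ₗ[ℂ] Aq n q) (h1 : S 1 = 1)
    (hm : ∀ u v : Aq n q, S (u * v) = S v * S u) : Aq n q →ₐ[ℂ] Aq n q :=
  AlgHom.ofLinearMap (S ∘ₗ S) (by simp [h1]) (by intro u v; simp [hm])

/-- Conjugation by `a`. -/
def Aq.Ad (n : ℕ) (hn : 2 ≤ n) (q : ℂ) : Aq n q →ₐ[ℂ] Aq n q :=
  AlgHom.ofLinearMap (LinearMap.mulRight ℂ (Aq.a n q ^ (n - 1)) ∘ₗ LinearMap.mulLeft ℂ (Aq.a n q))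
    (by simp [Aq.mul_inv n hn])
    (by
      intro u v
      simp only [LinearMap.comp_apply, LinearMap.mulLeft_apply, LinearMap.mulRight_apply]
      calc Aq.a n q * (u * v) * Aq.a n q ^ (n - 1)
          = Aq.a n q * u * 1 * v * Aq.a n q ^ (n - 1) := by simp only [mul_one, mul_assoc]
        _ = _ := by rw [← Aq.inv_mul n hn q]; simp only [mul_assoc])

theorem Aq.anti_pow {n : ℕ} {q : ℂ} (S : Aq n q →ₗ[ℂ] Aq n q) (h1 : S 1 = 1)
    (hm : ∀ u v : Aq n q, S (u * v) = S v * S u) (u : Aq n q) (k : ℕ) : S (u ^ k) = S u ^ k := by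
  induction k with
  | zero => simpa using h1
  | succ k ih => rw [pow_succ, hm, ih, pow_succ']

theorem Aq.anti_D {n : ℕ} {q : ℂ} (S : Aq n q →ₗ[ℂ] Aq n q) (h1 : S 1 = 1)
    (hm : ∀ u v : Aq n q, S (u * v) = S v * S u) (b : Aq n q) :
    S (Aq.D n q b) = Aq.D n q (S b) := by
  simp only [Aq.D, Aq.E, map_sum, map_smul, Aq.anti_pow S h1 hm]

/-- There is a unique ℂ-linear anti-homomorphism `S` of `A(q)` with `S(a) = a^{n-1}`
and `S(x) = -x ∑_z q^{n-z} 1_z`; moreover `S²(a) = a`, `S²(x) = q^{n+1} x`, and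
`S^{2n} = Ad(a)`. -/
theorem Aq_antipode (n : ℕ) (hn : 2 ≤ n) (q : ℂ) (hq : IsPrimitiveRoot q (n ^ 2)) :
    (∃! S : Aq n q →ₗ[ℂ] Aq n q,
      S 1 = 1 ∧ (∀ u v : Aq n q, S (u * v) = S v * S u) ∧
      S (Aq.a n q) = Aq.a n q ^ (n - 1) ∧
      S (Aq.x n q) = -(Aq.x n q * ∑ z ∈ Finset.range n, q ^ (n - z) • Aq.e n q z)) ∧
    (∀ S : Aq n q →ₗ[ℂ] Aq n q,
      S 1 = 1 → (∀ u v : Aq n q, S (u * v) = S v * S u) →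
      S (Aq.a n q) = Aq.a n q ^ (n - 1) →
      S (Aq.x n q) = -(Aq.x n q * ∑ z ∈ Finset.range n, q ^ (n - z) • Aq.e n q z) →
      S (S (Aq.a n q)) = Aq.a n q ∧
      S (S (Aq.x n q)) = q ^ (n + 1) • Aq.x n q ∧
      ∀ u : Aq n q, (⇑S)^[2 * n] u = Aq.a n q * u * Aq.a n q ^ (n - 1)) := by
  have hD : ∑ z ∈ Finset.range n, q ^ (n - z) • Aq.e n q z = Aq.D n q (Aq.a n q) := rfl
  rw [hD]
  constructor
  · obtain ⟨f, hfa, hfx⟩ := Aq.exists_hom n hn q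
    refine ⟨(MulOpposite.opLinearEquiv ℂ).symm.toLinearMap ∘ₗ f.toLinearMap, ⟨?_, ?_, ?_, ?_⟩, ?_⟩
    · simp
    · intro u v
      simp
    · simp [hfa, Aq.Sgen]
    · simp [hfx, Aq.Sgen]
    · rintro S ⟨h1, hm, ha, hx⟩
      have ht : ∀ u, Aq.toOp S h1 hm u = MulOpposite.op (S u) := fun u => rfl
      have h : Aq.toOp S h1 hm = f := by
        apply Aq.hom_ext
        · rw [hfa, ht, ha, Aq.Sgen]
        · rw [hfx, ht, hx, Aq.Sgen]
      rw [← h]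
      refine LinearMap.ext fun u => ?_
      rfl
  · intro S h1 hm ha hx
    have hSa : S (S (Aq.a n q)) = Aq.a n q := by
      rw [ha, Aq.anti_pow S h1 hm, ha, ← pow_mul]
      obtain ⟨m, rfl⟩ : ∃ m, n = m + 2 := ⟨n - 2, by omega⟩
      rw [show (m + 2 - 1) * (m + 2 - 1) = (m + 2) * m + 1 by
        rw [show m + 2 - 1 = m + 1 by omega]; ring, pow_succ, pow_mul, Aq.rel_a, one_pow, one_mul]
    have hSx : S (S (Aq.x n q)) = q ^ (n + 1) • Aq.x n q := by
      rw [hx, Aq.neg_eq, map_smul, hm, hx, Aq.neg_eq, Aq.anti_D S h1 hm, ha, mul_smul_comm,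
        smul_smul, Aq.DxD n hn q hq, neg_mul_neg, one_mul, one_smul]
    refine ⟨hSa, hSx, ?_⟩
    intro u
    have hk : ∀ k : ℕ, ∃ T : Aq n q →ₐ[ℂ] Aq n q, (∀ u, T u = (⇑S)^[2 * k] u) ∧
        T (Aq.a n q) = Aq.a n q ∧ T (Aq.x n q) = (q ^ (n + 1)) ^ k • Aq.x n q := by
      intro k
      induction k with
      | zero => exact ⟨AlgHom.id _ _, by simp, by simp, by simp⟩
      | succ k ih =>
        obtain ⟨T, hT, hTa, hTx⟩ := ih
        have hs : ∀ u, Aq.sq S h1 hm u = S (S u) := fun u => rfl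
        refine ⟨T.comp (Aq.sq S h1 hm), ?_, ?_, ?_⟩
        · intro u
          rw [AlgHom.comp_apply, hT, hs, show 2 * (k + 1) = 2 * k + 1 + 1 by ring,
            Function.iterate_succ_apply, Function.iterate_succ_apply]
        · rw [AlgHom.comp_apply, hs, hSa, hTa]
        · rw [AlgHom.comp_apply, hs, hSx, map_smul, hTx, smul_smul, pow_succ' (q ^ (n + 1)) k]
    obtain ⟨T, hT, hTa, hTx⟩ := hk n
    have hAd : ∀ u, Aq.Ad n hn q u = Aq.a n q * u * Aq.a n q ^ (n - 1) := fun u => rfl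
    rw [← hT, ← hAd]
    congr 1
    apply Aq.hom_ext
    · rw [hTa, hAd, mul_assoc, Aq.mul_inv n hn, mul_one]
    · rw [hTx, hAd, Aq.rel_comm, smul_mul_assoc, mul_assoc, Aq.mul_inv n hn, mul_one]
      congr 1
      rw [← pow_mul, add_mul, one_mul, pow_add, ← pow_two, hq.pow_eq_one, one_mul]
end
end

section
/- There exists a unique ℂ-algebra homomorphism Δ : H(32) → H(32) ⊗_ℂ H(32) satisfying Δ(a) = a ⊗ a, Δ(x) = x ⊗ (p₊ + i·p₋) + 1 ⊗ p₊x + a ⊗ p₋x and Δ(y) = y ⊗ (p₊ − i·p₋) + 1 ⊗ p₊y + a ⊗ p₋y, and a unique ℂ-algebra homomorphism ε : H(32) → ℂ with ε(a) = 1, ε(x) = 0, ε(y) = 0; moreover (ε ⊗ id) ∘ Δ = id and (id ⊗ ε) ∘ Δ = id. -/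
noncomputable section

open scoped TensorProduct

/-- The three generators of `H(32)`. -/
inductive HGen : Type
  | a : HGen
  | x : HGen
  | y : HGen

open FreeAlgebra

/-- The defining relations of `H(32)` (for `i` a fixed primitive 4th root of unity):
`a² = 1`, `ax = -xa`, `ay = -ya`, `x⁴ = 0`, `y⁴ = 0`, `xy = -i·yx`. -/
inductive HRel (i : ℂ) : FreeAlgebra ℂ HGen → FreeAlgebra ℂ HGen → Prop
  | aSq : HRel i ((ι ℂ HGen.a) ^ 2) 1
  | ax : HRel i (ι ℂ HGen.a * ι ℂ HGen.x) (-(ι ℂ HGen.x * ι ℂ HGen.a))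
  | ay : HRel i (ι ℂ HGen.a * ι ℂ HGen.y) (-(ι ℂ HGen.y * ι ℂ HGen.a))
  | xQuart : HRel i ((ι ℂ HGen.x) ^ 4) 0
  | yQuart : HRel i ((ι ℂ HGen.y) ^ 4) 0
  | xy : HRel i (ι ℂ HGen.x * ι ℂ HGen.y) (-(i • (ι ℂ HGen.y * ι ℂ HGen.x)))

/-- The algebra `H(32)`. -/
abbrev H32 (i : ℂ) : Type := RingQuot (HRel i)

/-- The image of the generator `a` in `H(32)`. -/
def H32.a (i : ℂ) : H32 i := RingQuot.mkAlgHom ℂ (HRel i) (ι ℂ HGen.a)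

/-- The image of the generator `x` in `H(32)`. -/
def H32.x (i : ℂ) : H32 i := RingQuot.mkAlgHom ℂ (HRel i) (ι ℂ HGen.x)

/-- The image of the generator `y` in `H(32)`. -/
def H32.y (i : ℂ) : H32 i := RingQuot.mkAlgHom ℂ (HRel i) (ι ℂ HGen.y)

/-- `p₊ = (1+a)/2`. -/
def H32.pp (i : ℂ) : H32 i := (2 : ℂ)⁻¹ • (1 + H32.a i)

/-- `p₋ = (1-a)/2`. -/
def H32.pm (i : ℂ) : H32 i := (2 : ℂ)⁻¹ • (1 - H32.a i)


section Aux

set_option linter.unusedSimpArgs false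

variable {R : Type*} [Ring R] [Algebra ℂ R]

lemma aux_quartic (s : ℂ) (hs : s ^ 2 = -1) (A B : R) (h : B * A = s • (A * B)) :
    (A + B) ^ 4 = A ^ 4 + B ^ 4 := by
  have h' : ∀ C : R, B * (A * C) = s • (A * (B * C)) := fun C => by
    rw [← mul_assoc, h, smul_mul_assoc, mul_assoc]
  simp only [pow_succ, pow_zero, one_mul, mul_add, add_mul, mul_assoc, h, h', mul_smul_comm,
    smul_mul_assoc, smul_smul]
  match_scalars <;> grind

/-- The element `(1+a)/2`. -/
def auxP (a : R) : R := (2 : ℂ)⁻¹ • (1 + a)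

/-- The element `(1-a)/2`. -/
def auxM (a : R) : R := (2 : ℂ)⁻¹ • (1 - a)

lemma aux_add (a : R) : auxP a + auxM a = 1 := by
  unfold auxP auxM; module

lemma aux_pp (a : R) (ha : a * a = 1) : auxP a * auxP a = auxP a := by
  simp only [auxP, auxM, smul_mul_assoc, mul_smul_comm, mul_add, add_mul, mul_sub, sub_mul, ha,
    one_mul, mul_one]
  module

lemma aux_mm (a : R) (ha : a * a = 1) : auxM a * auxM a = auxM a := by
  simp only [auxP, auxM, smul_mul_assoc, mul_smul_comm, mul_add, add_mul, mul_sub, sub_mul, ha,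
    one_mul, mul_one]
  module

lemma aux_pm (a : R) (ha : a * a = 1) : auxP a * auxM a = 0 := by
  simp only [auxP, auxM, smul_mul_assoc, mul_smul_comm, mul_add, add_mul, mul_sub, sub_mul, ha,
    one_mul, mul_one]
  module

lemma aux_mp (a : R) (ha : a * a = 1) : auxM a * auxP a = 0 := by
  simp only [auxP, auxM, smul_mul_assoc, mul_smul_comm, mul_add, add_mul, mul_sub, sub_mul, ha,
    one_mul, mul_one]
  module

lemma aux_zp (a z : R) (h : a * z = -(z * a)) : z * auxP a = auxM a * z := by
  simp only [auxP, auxM, smul_mul_assoc, mul_smul_comm, mul_add, sub_mul, h,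
    one_mul, mul_one]
  module

lemma aux_zm (a z : R) (h : a * z = -(z * a)) : z * auxM a = auxP a * z := by
  simp only [auxP, auxM, smul_mul_assoc, mul_smul_comm, mul_sub, add_mul, h,
    one_mul, mul_one]
  module

lemma aux_ap (a : R) (ha : a * a = 1) : a * auxP a = auxP a := by
  simp only [auxP, mul_smul_comm, mul_add, ha, mul_one]
  module

lemma aux_am (a : R) (ha : a * a = 1) : a * auxM a = - auxM a := by
  simp only [auxM, mul_smul_comm, mul_sub, ha, mul_one]
  module

/-- The second part of the coproduct of `z`. -/
def auxB (a z : R) : R ⊗[ℂ] R := 1 ⊗ₜ[ℂ] (auxP a * z) + a ⊗ₜ[ℂ] (auxM a * z)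

lemma aux_BB (a z w : R) (ha : a * a = 1) (hz : a * z = -(z * a)) :
    auxB a z * auxB a w = a ⊗ₜ[ℂ] (z * w) := by
  have e1 : auxP a * z * (auxP a * w) = 0 := by
    rw [mul_assoc, ← mul_assoc z, aux_zp a z hz, ← mul_assoc, ← mul_assoc, aux_pm a ha]; simp
  have e2 : auxP a * z * (auxM a * w) = auxP a * (z * w) := by
    rw [mul_assoc, ← mul_assoc z, aux_zm a z hz, ← mul_assoc, ← mul_assoc, aux_pp a ha, mul_assoc]
  have e3 : auxM a * z * (auxP a * w) = auxM a * (z * w) := by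
    rw [mul_assoc, ← mul_assoc z, aux_zp a z hz, ← mul_assoc, ← mul_assoc, aux_mm a ha, mul_assoc]
  have e4 : auxM a * z * (auxM a * w) = 0 := by
    rw [mul_assoc, ← mul_assoc z, aux_zm a z hz, ← mul_assoc, ← mul_assoc, aux_mp a ha]; simp
  simp only [auxB, mul_add, add_mul, Algebra.TensorProduct.tmul_mul_tmul, e1, e2, e3, e4, one_mul,
    mul_one, TensorProduct.tmul_zero, zero_add, add_zero]
  rw [← TensorProduct.tmul_add, ← add_mul, add_comm, aux_add, one_mul]

lemma aux_BA (s : ℂ) (hs : s ^ 2 = -1) (a z u : R) (ha : a * a = 1) (hz : a * z = -(z * a))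
    (hu : a * u = -(u * a)) :
    auxB a z * (u ⊗ₜ[ℂ] (auxP a + s • auxM a)) =
      s • ((u ⊗ₜ[ℂ] (auxP a + s • auxM a)) * auxB a z) := by
  have e1 : auxP a * z * (auxP a + s • auxM a) = s • (auxP a * z) := by
    rw [mul_assoc, mul_add, mul_smul_comm, aux_zp a z hz, aux_zm a z hz, mul_add, mul_smul_comm,
      ← mul_assoc, ← mul_assoc, aux_pp a ha, aux_pm a ha]; simp
  have e2 : auxM a * z * (auxP a + s • auxM a) = auxM a * z := by
    rw [mul_assoc, mul_add, mul_smul_comm, aux_zp a z hz, aux_zm a z hz, mul_add, mul_smul_comm,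
      ← mul_assoc, ← mul_assoc, aux_mm a ha, aux_mp a ha]; simp
  have e3 : (auxP a + s • auxM a) * (auxP a * z) = auxP a * z := by
    rw [← mul_assoc, add_mul, smul_mul_assoc, aux_pp a ha, aux_mp a ha]; simp
  have e4 : (auxP a + s • auxM a) * (auxM a * z) = s • (auxM a * z) := by
    rw [← mul_assoc, add_mul, smul_mul_assoc, aux_pm a ha, aux_mm a ha]; simp
  rw [auxB, mul_add, add_mul]
  simp only [Algebra.TensorProduct.tmul_mul_tmul, one_mul,
    mul_one]
  rw [e1, e2, e3, e4, hu]
  simp only [TensorProduct.tmul_smul, TensorProduct.neg_tmul, smul_add, smul_smul, ← pow_two, hs]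
  module

lemma aux_anti (s : ℂ) (a z : R) (ha : a * a = 1) (hz : a * z = -(z * a)) :
    (a ⊗ₜ[ℂ] a) * (z ⊗ₜ[ℂ] (auxP a + s • auxM a) + auxB a z) =
      -((z ⊗ₜ[ℂ] (auxP a + s • auxM a) + auxB a z) * (a ⊗ₜ[ℂ] a)) := by
  have c : a * (auxP a + s • auxM a) = (auxP a + s • auxM a) * a := by
    simp only [auxP, auxM, smul_mul_assoc, mul_smul_comm, mul_add, add_mul, mul_sub, sub_mul, ha,
      one_mul, mul_one]
  have c1 : a * (auxP a * z) = -(auxP a * z * a) := by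
    have : a * auxP a = auxP a * a := by
      simp only [auxP, smul_mul_assoc, mul_smul_comm, mul_add, add_mul, one_mul, mul_one]
    rw [← mul_assoc, this, mul_assoc, hz, mul_neg, mul_assoc]
  have c2 : a * (auxM a * z) = -(auxM a * z * a) := by
    have : a * auxM a = auxM a * a := by
      simp only [auxM, smul_mul_assoc, mul_smul_comm, mul_sub, sub_mul, one_mul, mul_one]
    rw [← mul_assoc, this, mul_assoc, hz, mul_neg, mul_assoc]
  rw [auxB, mul_add, mul_add, add_mul, add_mul]
  simp only [Algebra.TensorProduct.tmul_mul_tmul, c, c1, c2, hz, one_mul, mul_one,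
    TensorProduct.neg_tmul, TensorProduct.tmul_neg]
  abel

lemma aux_gpow (s : ℂ) (a z : R) (hz : a * z = -(z * a)) (ha : a * a = 1) (hs : s ^ 2 = -1)
    (h4 : z ^ 4 = 0) :
    (z ⊗ₜ[ℂ] (auxP a + s • auxM a) + auxB a z) ^ 4 = 0 := by
  rw [aux_quartic s hs _ _ (aux_BA s hs a z z ha hz hz), Algebra.TensorProduct.tmul_pow, h4,
    TensorProduct.zero_tmul, zero_add]
  have : auxB a z ^ 4 = (auxB a z * auxB a z) * (auxB a z * auxB a z) := by
    noncomm_ring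
  rw [this, aux_BB a z z ha hz, Algebra.TensorProduct.tmul_mul_tmul]
  have : z * z * (z * z) = z ^ 4 := by noncomm_ring
  rw [this, h4, TensorProduct.tmul_zero]

lemma aux_form (s : ℂ) (a z : R) :
    z ⊗ₜ[ℂ] (auxP a + (-s) • auxM a) + auxB a z =
      z ⊗ₜ[ℂ] (auxP a - s • auxM a) + 1 ⊗ₜ[ℂ] (auxP a * z) + a ⊗ₜ[ℂ] (auxM a * z) := by
  rw [auxB, ← add_assoc, neg_smul, ← sub_eq_add_neg]

lemma aux_xy (i : ℂ) (hi : i ^ 2 = -1) (a x y : R) (ha : a * a = 1) (hx : a * x = -(x * a))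
    (hy : a * y = -(y * a)) (hxy : x * y = -(i • (y * x))) :
    (x ⊗ₜ[ℂ] (auxP a + i • auxM a) + auxB a x) * (y ⊗ₜ[ℂ] (auxP a + (-i) • auxM a) + auxB a y) =
      -(i • ((y ⊗ₜ[ℂ] (auxP a + (-i) • auxM a) + auxB a y) *
        (x ⊗ₜ[ℂ] (auxP a + i • auxM a) + auxB a x))) := by
  have hi' : (-i) ^ 2 = -1 := by rw [neg_sq, hi]
  have gh : ∀ s : ℂ, s ^ 2 = -1 →
      (auxP a + s • auxM a) * (auxP a + (-s) • auxM a) = 1 := fun s hs => by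
    simp only [mul_add, add_mul, smul_mul_assoc, mul_smul_comm, aux_pp a ha, aux_pm a ha,
      aux_mp a ha, aux_mm a ha, smul_smul, smul_zero, add_zero, zero_add]
    rw [show -s * s = 1 by linear_combination -hs, one_smul, aux_add]
  have hg := gh (-i) hi'
  rw [neg_neg] at hg
  have b1 := aux_BA i hi a y x ha hy hx
  have b2 := aux_BA (-i) hi' a x y ha hx hy
  generalize hA : x ⊗ₜ[ℂ] (auxP a + i • auxM a) = A at *
  generalize hC : y ⊗ₜ[ℂ] (auxP a + (-i) • auxM a) = C at *
  have b3 : A * C = -(i • (C * A)) := by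
    rw [← hA, ← hC, Algebra.TensorProduct.tmul_mul_tmul, Algebra.TensorProduct.tmul_mul_tmul,
      gh i hi, hg, hxy, TensorProduct.neg_tmul, TensorProduct.smul_tmul']
  have b4 : auxB a x * auxB a y = -(i • (auxB a y * auxB a x)) := by
    rw [aux_BB a x y ha hx, aux_BB a y x ha hy, hxy, TensorProduct.tmul_neg,
      TensorProduct.tmul_smul]
  rw [mul_add, mul_add, add_mul, add_mul, add_mul, add_mul, b3, b4, b1, b2]
  match_scalars <;> grind

end Aux

lemma H32.aa (i : ℂ) : H32.a i * H32.a i = 1 := by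
  have := RingQuot.mkAlgHom_rel ℂ (HRel.aSq (i := i))
  simpa [pow_two, H32.a] using this

lemma H32.ax (i : ℂ) : H32.a i * H32.x i = -(H32.x i * H32.a i) := by
  have := RingQuot.mkAlgHom_rel ℂ (HRel.ax (i := i))
  rwa [map_neg, map_mul, map_mul] at this

lemma H32.ay (i : ℂ) : H32.a i * H32.y i = -(H32.y i * H32.a i) := by
  have := RingQuot.mkAlgHom_rel ℂ (HRel.ay (i := i))
  rwa [map_neg, map_mul, map_mul] at this

lemma H32.x4 (i : ℂ) : H32.x i ^ 4 = 0 := by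
  have := RingQuot.mkAlgHom_rel ℂ (HRel.xQuart (i := i))
  rwa [map_pow, map_zero] at this

lemma H32.y4 (i : ℂ) : H32.y i ^ 4 = 0 := by
  have := RingQuot.mkAlgHom_rel ℂ (HRel.yQuart (i := i))
  rwa [map_pow, map_zero] at this

lemma H32.xy (i : ℂ) : H32.x i * H32.y i = -(i • (H32.y i * H32.x i)) := by
  have := RingQuot.mkAlgHom_rel ℂ (HRel.xy (i := i))
  rwa [map_neg, map_smul, map_mul, map_mul] at this

lemma H32.hom_ext {i : ℂ} {S : Type*} [Semiring S] [Algebra ℂ S] {f g : H32 i →ₐ[ℂ] S}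
    (ha : f (H32.a i) = g (H32.a i)) (hx : f (H32.x i) = g (H32.x i))
    (hy : f (H32.y i) = g (H32.y i)) : f = g := by
  apply RingQuot.ringQuot_ext'
  apply FreeAlgebra.hom_ext
  funext t
  cases t
  · exact ha
  · exact hx
  · exact hy

lemma H32.exists_lift (i : ℂ) {S : Type*} [Ring S] [Algebra ℂ S] (a x y : S)
    (ha : a ^ 2 = 1) (hax : a * x = -(x * a)) (hay : a * y = -(y * a)) (hx : x ^ 4 = 0)
    (hy : y ^ 4 = 0) (hxy : x * y = -(i • (y * x))) :
    ∃ f : H32 i →ₐ[ℂ] S, f (H32.a i) = a ∧ f (H32.x i) = x ∧ f (H32.y i) = y := by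
  let φ : FreeAlgebra ℂ HGen →ₐ[ℂ] S :=
    FreeAlgebra.lift ℂ (fun t => match t with | .a => a | .x => x | .y => y)
  have fa : φ (ι ℂ HGen.a) = a := FreeAlgebra.lift_ι_apply _ _
  have fx : φ (ι ℂ HGen.x) = x := FreeAlgebra.lift_ι_apply _ _
  have fy : φ (ι ℂ HGen.y) = y := FreeAlgebra.lift_ι_apply _ _
  have H : ∀ ⦃u v⦄, HRel i u v → φ u = φ v := by
    intro u v h
    cases h <;> simp only [map_pow, map_mul, map_neg, map_smul, map_one, map_zero, fa, fx, fy] <;>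
      assumption
  refine ⟨RingQuot.liftAlgHom ℂ ⟨φ, H⟩, ?_, ?_, ?_⟩
  · rw [H32.a, RingQuot.liftAlgHom_mkAlgHom_apply, fa]
  · rw [H32.x, RingQuot.liftAlgHom_mkAlgHom_apply, fx]
  · rw [H32.y, RingQuot.liftAlgHom_mkAlgHom_apply, fy]

/-- There is a unique algebra map `Δ : H(32) → H(32) ⊗ H(32)` with
`Δ(a) = a ⊗ a`, `Δ(x) = x ⊗ (p₊ + i p₋) + 1 ⊗ p₊x + a ⊗ p₋x`,
`Δ(y) = y ⊗ (p₊ - i p₋) + 1 ⊗ p₊y + a ⊗ p₋y`, and a unique algebra map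
`ε : H(32) → ℂ` with `ε(a) = 1`, `ε(x) = ε(y) = 0`; moreover they satisfy
the counit axioms. -/
theorem H32_coproduct_counit (i : ℂ) (hi : IsPrimitiveRoot i 4) :
    (∃! Δ : H32 i →ₐ[ℂ] (H32 i ⊗[ℂ] H32 i),
      Δ (H32.a i) = H32.a i ⊗ₜ[ℂ] H32.a i ∧
      Δ (H32.x i) = H32.x i ⊗ₜ[ℂ] (H32.pp i + i • H32.pm i)
        + 1 ⊗ₜ[ℂ] (H32.pp i * H32.x i) + H32.a i ⊗ₜ[ℂ] (H32.pm i * H32.x i) ∧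
      Δ (H32.y i) = H32.y i ⊗ₜ[ℂ] (H32.pp i - i • H32.pm i)
        + 1 ⊗ₜ[ℂ] (H32.pp i * H32.y i) + H32.a i ⊗ₜ[ℂ] (H32.pm i * H32.y i)) ∧
    (∃! ε : H32 i →ₐ[ℂ] ℂ,
      ε (H32.a i) = 1 ∧ ε (H32.x i) = 0 ∧ ε (H32.y i) = 0) ∧
    (∀ (Δ : H32 i →ₐ[ℂ] (H32 i ⊗[ℂ] H32 i)) (ε : H32 i →ₐ[ℂ] ℂ),
      (Δ (H32.a i) = H32.a i ⊗ₜ[ℂ] H32.a i ∧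
       Δ (H32.x i) = H32.x i ⊗ₜ[ℂ] (H32.pp i + i • H32.pm i)
        + 1 ⊗ₜ[ℂ] (H32.pp i * H32.x i) + H32.a i ⊗ₜ[ℂ] (H32.pm i * H32.x i) ∧
       Δ (H32.y i) = H32.y i ⊗ₜ[ℂ] (H32.pp i - i • H32.pm i)
        + 1 ⊗ₜ[ℂ] (H32.pp i * H32.y i) + H32.a i ⊗ₜ[ℂ] (H32.pm i * H32.y i)) →
      (ε (H32.a i) = 1 ∧ ε (H32.x i) = 0 ∧ ε (H32.y i) = 0) →
      ∀ z : H32 i,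
        (Algebra.TensorProduct.lid ℂ (H32 i))
          ((Algebra.TensorProduct.map ε (AlgHom.id ℂ (H32 i))) (Δ z)) = z ∧
        (Algebra.TensorProduct.rid ℂ ℂ (H32 i))
          ((Algebra.TensorProduct.map (AlgHom.id ℂ (H32 i)) ε) (Δ z)) = z) := by
  have hi2 : i ^ 2 = -1 := by
    have h4 : i ^ 4 = 1 := hi.pow_eq_one
    have h2 : i ^ 2 ≠ 1 := hi.pow_ne_one_of_pos_of_lt (by norm_num) (by norm_num)
    have : (i ^ 2 - 1) * (i ^ 2 + 1) = 0 := by linear_combination h4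
    rcases mul_eq_zero.mp this with h | h
    · exact absurd (sub_eq_zero.mp h) h2
    · exact eq_neg_of_add_eq_zero_left h
  have hi2' : (-i) ^ 2 = -1 := by rw [neg_sq, hi2]
  have aa := H32.aa i
  have ax := H32.ax i
  have ay := H32.ay i
  refine ⟨?_, ?_, ?_⟩
  · obtain ⟨f, fa, fx, fy⟩ := H32.exists_lift i (H32.a i ⊗ₜ[ℂ] H32.a i)
      (H32.x i ⊗ₜ[ℂ] (auxP (H32.a i) + i • auxM (H32.a i)) + auxB (H32.a i) (H32.x i))
      (H32.y i ⊗ₜ[ℂ] (auxP (H32.a i) + (-i) • auxM (H32.a i)) + auxB (H32.a i) (H32.y i))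
      (by rw [pow_two, Algebra.TensorProduct.tmul_mul_tmul, aa,
        Algebra.TensorProduct.one_def])
      (aux_anti i _ _ aa ax) (aux_anti (-i) _ _ aa ay)
      (aux_gpow i _ _ ax aa hi2 (H32.x4 i)) (aux_gpow (-i) _ _ ay aa hi2' (H32.y4 i))
      (aux_xy i hi2 _ _ _ aa ax ay (H32.xy i))
    refine ⟨f, ⟨fa, ?_, ?_⟩, ?_⟩
    · rw [fx, auxB, ← add_assoc]; rfl
    · exact fy.trans (aux_form i (H32.a i) (H32.y i))
    · rintro g ⟨ga, gx, gy⟩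
      apply H32.hom_ext
      · rw [fa, ga]
      · rw [fx, gx, auxB, ← add_assoc]; rfl
      · exact gy.trans (fy.trans (aux_form i (H32.a i) (H32.y i))).symm
  · obtain ⟨f, fa, fx, fy⟩ := H32.exists_lift i (1 : ℂ) 0 0
      (by simp) (by simp) (by simp) (by simp) (by simp) (by simp)
    refine ⟨f, ⟨fa, fx, fy⟩, ?_⟩
    rintro g ⟨ga, gx, gy⟩
    apply H32.hom_ext
    · rw [fa, ga]
    · rw [fx, gx]
    · rw [fy, gy]
  · rintro D e ⟨Da, Dx, Dy⟩ ⟨ea, ex, ey⟩ z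
    have ep : e (H32.pp i) = 1 := by
      rw [H32.pp, map_smul, map_add, map_one, ea]; norm_num
    have em : e (H32.pm i) = 0 := by
      rw [H32.pm, map_smul, map_sub, map_one, ea]; norm_num
    have pm1 : H32.pp i + H32.pm i = 1 := aux_add (H32.a i)
    constructor
    · have : ((Algebra.TensorProduct.lid ℂ (H32 i)).toAlgHom.comp
          ((Algebra.TensorProduct.map e (AlgHom.id ℂ (H32 i))).comp D)) = AlgHom.id ℂ _ := by
        apply H32.hom_ext
        · simp [Da, ea]
        · simp [Dx, ea, ex, ← add_mul, pm1]
        · simp [Dy, ea, ey, ← add_mul, pm1]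
      exact DFunLike.congr_fun this z
    · have : ((Algebra.TensorProduct.rid ℂ ℂ (H32 i)).toAlgHom.comp
          ((Algebra.TensorProduct.map (AlgHom.id ℂ (H32 i)) e).comp D)) = AlgHom.id ℂ _ := by
        apply H32.hom_ext
        · simp [Da, ea]
        · simp [Dx, ex, ep, em]
        · simp [Dy, ey, ep, em]
      exact DFunLike.congr_fun this z
end
end
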